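/- Let f = h + conj(g) be harmonic on the unit disk with h, g analytic, g(0) = 0, and f in the harmonic Hardy space h². Then ∫_{-1}^{1} |f(x)|² dx ≤ (1/2) ∫₀^{2π} |f(e^{iθ})|² dθ + ∫₀^{2π} |h(e^{iθ}) g(e^{iθ})| dθ. -/

import Mathlib

open Complex MeasureTheory Real Filter
open scoped Topology ENNReal ComplexConjugate

theorem ofReal_mul_exp_mem_ball {r : ℝ} (hr0 : 0 ≤ r) (hr1 : r < 1) (θ : ℝ) :
    (r : ℂ) * cexp (θ * I) ∈ Metric.ball (0 : ℂ) 1 := by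
  simp [Complex.norm_exp_ofReal_mul_I, abs_of_nonneg hr0, hr1]

theorem DifferentiableOn.continuous_on_circle {φ : ℂ → ℂ}
    (hφ : DifferentiableOn ℂ φ (Metric.ball 0 1)) {r : ℝ} (hr0 : 0 ≤ r) (hr1 : r < 1) :
    Continuous fun θ : ℝ => φ ((r : ℂ) * cexp (θ * I)) :=
  hφ.continuousOn.comp_continuous (by fun_prop) fun θ => ofReal_mul_exp_mem_ball hr0 hr1 θ

/-- The Riesz–Fejér inequality for the modulus of the integral of a holomorphic function
along a diameter. -/
theorem two_mul_norm_integral_diameter_le {φ : ℂ → ℂ}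
    (hφ : DifferentiableOn ℂ φ (Metric.ball 0 1)) {r : ℝ} (hr0 : 0 ≤ r) (hr1 : r < 1) :
    2 * ‖∫ x in (-r)..r, φ (x : ℂ)‖ ≤
      r * ∫ θ in (0 : ℝ)..(2 * π), ‖φ ((r : ℂ) * cexp (θ * I))‖ := by
  obtain ⟨Φ, hΦ⟩ := hφ.isExactOn_ball
  have hc := hφ.continuous_on_circle hr0 hr1
  have hdiam : ∫ x in (-r)..r, φ (x : ℂ) = Φ r - Φ (-r) := by
    have hmem : ∀ x ∈ Set.uIcc (-r) r, (x : ℂ) ∈ Metric.ball (0 : ℂ) 1 := by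
      intro x hx
      rw [Set.uIcc_of_le (by linarith)] at hx
      have : |x| < 1 := abs_lt.2 ⟨by linarith [hx.1], by linarith [hx.2]⟩
      simpa using this
    rw [intervalIntegral.integral_eq_sub_of_hasDerivAt (f := fun x : ℝ => Φ x)
      (fun x hx => (hΦ _ (hmem x hx)).comp_ofReal)
      (hφ.continuousOn.comp (by fun_prop) hmem).intervalIntegrable]
    simp
  have harc : ∀ a b : ℝ, ∫ θ in a..b, φ ((r : ℂ) * cexp (θ * I)) * (r * (cexp (θ * I) * I)) =
      Φ ((r : ℂ) * cexp (b * I)) - Φ ((r : ℂ) * cexp (a * I)) := by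
    intro a b
    refine intervalIntegral.integral_eq_sub_of_hasDerivAt
      (f := fun θ : ℝ => Φ ((r : ℂ) * cexp (θ * I))) (fun θ _ => ?_) ?_
    · have h1 : HasDerivAt (fun θ : ℝ => (r : ℂ) * cexp (θ * I)) (r * (cexp (θ * I) * I)) θ := by
        have := ((hasDerivAt_id (θ : ℂ)).mul_const I).cexp.const_mul (r : ℂ)
        simpa using this.comp_ofReal
      exact (hΦ _ (ofReal_mul_exp_mem_ball hr0 hr1 θ)).comp θ h1
    · exact (hc.mul (by fun_prop)).intervalIntegrable _ _
  have hnorm : ∀ a b : ℝ, a ≤ b →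
      ‖Φ ((r : ℂ) * cexp (b * I)) - Φ ((r : ℂ) * cexp (a * I))‖ ≤
        r * ∫ θ in a..b, ‖φ ((r : ℂ) * cexp (θ * I))‖ := by
    intro a b hab
    rw [← harc a b]
    refine (intervalIntegral.norm_integral_le_integral_norm hab).trans_eq ?_
    rw [← intervalIntegral.integral_const_mul]
    congr 1 with θ
    simp [abs_of_nonneg hr0, mul_comm]
  have h1 := hnorm 0 π pi_pos.le
  have h2 := hnorm π (2 * π) (by linarith [pi_pos])
  have h3 := intervalIntegral.integral_add_adjacent_intervals
    (hc.norm.intervalIntegrable (μ := volume) 0 π) (hc.norm.intervalIntegrable π (2 * π))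
  have e2 : cexp (((2 * π : ℝ) : ℂ) * I) = 1 := by
    push_cast; exact Complex.exp_two_pi_mul_I
  rw [e2, Complex.exp_pi_mul_I, mul_one, mul_neg_one] at h2
  rw [Complex.exp_pi_mul_I, mul_neg_one, Complex.ofReal_zero, zero_mul, Complex.exp_zero,
    mul_one, norm_sub_rev] at h1
  rw [hdiam, ← h3]
  linarith

/-- The `L²` Riesz–Fejér inequality on a circle of radius `r < 1`. -/
theorem two_mul_integral_norm_sq_diameter_le {φ : ℂ → ℂ}
    (hφ : DifferentiableOn ℂ φ (Metric.ball 0 1)) {r : ℝ} (hr0 : 0 ≤ r) (hr1 : r < 1) :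
    2 * ∫ x in (-r)..r, ‖φ (x : ℂ)‖ ^ 2 ≤
      r * ∫ θ in (0 : ℝ)..(2 * π), ‖φ ((r : ℂ) * cexp (θ * I))‖ ^ 2 := by
  have hψ : DifferentiableOn ℂ (fun z => φ z * conj (φ (conj z))) (Metric.ball 0 1) := by
    refine hφ.mul fun z hz => ?_
    have hz' : conj z ∈ Metric.ball (0 : ℂ) 1 := by simpa using hz
    have := (hφ.differentiableAt (Metric.isOpen_ball.mem_nhds hz')).conj_conj
    rw [Complex.conj_conj] at this
    exact this.differentiableWithinAt
  have hc := hφ.continuous_on_circle hr0 hr1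
  have hc' : Continuous fun θ : ℝ => φ ((r : ℂ) * cexp ((-θ : ℝ) * I)) :=
    hc.comp continuous_neg
  have hmain := two_mul_norm_integral_diameter_le hψ hr0 hr1
  have hl : ∫ x in (-r)..r, φ (x : ℂ) * conj (φ (conj (x : ℂ))) =
      ((∫ x in (-r)..r, ‖φ (x : ℂ)‖ ^ 2 : ℝ) : ℂ) := by
    rw [← intervalIntegral.integral_ofReal]
    congr 1 with x
    rw [Complex.conj_ofReal, Complex.mul_conj, Complex.normSq_eq_norm_sq]
  rw [hl, Complex.norm_real] at hmain
  have hconj : ∀ θ : ℝ, conj ((r : ℂ) * cexp (θ * I)) = (r : ℂ) * cexp ((-θ : ℝ) * I) := by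
    intro θ
    rw [map_mul, Complex.conj_ofReal, ← Complex.exp_conj]
    simp
  have hrefl : ∫ θ in (0 : ℝ)..(2 * π), ‖φ ((r : ℂ) * cexp ((-θ : ℝ) * I))‖ ^ 2 =
      ∫ θ in (0 : ℝ)..(2 * π), ‖φ ((r : ℂ) * cexp (θ * I))‖ ^ 2 := by
    rw [intervalIntegral.integral_comp_neg
      (f := fun θ : ℝ => ‖φ ((r : ℂ) * cexp (θ * I))‖ ^ 2)]
    have hp : Function.Periodic (fun θ : ℝ => ‖φ ((r : ℂ) * cexp (θ * I))‖ ^ 2) (2 * π) := by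
      intro θ
      have : cexp (((θ + 2 * π : ℝ) : ℂ) * I) = cexp (θ * I) := by
        push_cast
        rw [add_mul, Complex.exp_add, Complex.exp_two_pi_mul_I, mul_one]
      simp only [this]
    simpa using hp.intervalIntegral_add_eq (-(2 * π)) 0
  have hle : ∫ θ in (0 : ℝ)..(2 * π), ‖φ ((r : ℂ) * cexp (θ * I)) *
        conj (φ (conj ((r : ℂ) * cexp (θ * I))))‖ ≤
      ∫ θ in (0 : ℝ)..(2 * π), (1 / 2 * ‖φ ((r : ℂ) * cexp (θ * I))‖ ^ 2 +
        1 / 2 * ‖φ ((r : ℂ) * cexp ((-θ : ℝ) * I))‖ ^ 2) := by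
    simp only [hconj]
    refine intervalIntegral.integral_mono_on (by positivity) ?_ ?_ fun θ _ => ?_
    · exact (hc.mul (Complex.continuous_conj.comp hc')).norm.intervalIntegrable _ _
    · exact ((continuous_const.mul (hc.norm.pow 2)).add
        (continuous_const.mul (hc'.norm.pow 2))).intervalIntegrable _ _
    · rw [norm_mul, RCLike.norm_conj]
      nlinarith [sq_nonneg (‖φ ((r : ℂ) * cexp (θ * I))‖ - ‖φ ((r : ℂ) * cexp ((-θ : ℝ) * I))‖)]
  rw [intervalIntegral.integral_add, intervalIntegral.integral_const_mul,
    intervalIntegral.integral_const_mul, hrefl] at hle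
  · have := mul_le_mul_of_nonneg_left hle hr0
    have h5 := le_abs_self (∫ x in (-r)..r, ‖φ (x : ℂ)‖ ^ 2)
    rw [Real.norm_eq_abs] at hmain
    linarith
  · exact (continuous_const.mul (hc.norm.pow 2)).intervalIntegrable _ _
  · exact (continuous_const.mul (hc'.norm.pow 2)).intervalIntegrable _ _

theorem integral_circle_eq {φ : ℂ → ℂ}
    (hφ : DifferentiableOn ℂ φ (Metric.ball 0 1)) {r : ℝ} (hr0 : 0 ≤ r) (hr1 : r < 1) :
    ∫ θ in (0 : ℝ)..(2 * π), φ ((r : ℂ) * cexp (θ * I)) = 2 * π * φ 0 := by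
  have h : DiffContOnCl ℂ φ (Metric.ball 0 |r|) := by
    rw [abs_of_nonneg hr0]
    exact (hφ.mono (Metric.closure_ball_subset_closedBall.trans
      (Metric.closedBall_subset_ball hr1))).diffContOnCl
  have := h.circleAverage
  rw [circleAverage] at this
  simp only [circleMap_zero] at this
  rw [← this, Complex.real_smul]
  push_cast
  rw [mul_inv_cancel_left₀ (by simp)]

theorem integral_exp_int_mul_I (k : ℤ) :
    ∫ θ in (0 : ℝ)..(2 * π), cexp (k * (θ * I)) = if k = 0 then 2 * (π : ℂ) else 0 := by
  split_ifs with hk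
  · simp [hk]
  · have hc : (k : ℂ) * I ≠ 0 := by simp [hk]
    have : ∀ θ : ℝ, (k : ℂ) * (θ * I) = (k * I) * θ := fun θ => by ring
    simp only [this]
    rw [integral_exp_mul_complex hc]
    have e : (k : ℂ) * I * ((2 * π : ℝ) : ℂ) = k * (2 * π * I) := by push_cast; ring
    rw [e, Complex.exp_int_mul_two_pi_mul_I]
    simp

/-- Parseval's identity for an absolutely convergent one-sided Fourier series. -/
theorem integral_norm_sq_eq_tsum {c : ℕ → ℂ} (hc : Summable fun n => ‖c n‖) {u : ℝ → ℂ}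
    (hu : ∀ θ : ℝ, HasSum (fun n : ℕ => c n * cexp (n * (θ * I))) (u θ)) :
    ∫ θ in (0 : ℝ)..(2 * π), ‖u θ‖ ^ 2 = 2 * π * ∑' n, ‖c n‖ ^ 2 := by
  have hexp : ∀ (n : ℕ) (θ : ℝ), ‖cexp (n * (θ * I))‖ = 1 := fun n θ => by
    rw [Complex.norm_exp]; simp
  have hucont : Continuous u := by
    have : u = fun θ : ℝ => ∑' n, c n * cexp (n * (θ * I)) := by
      ext θ; exact (hu θ).tsum_eq.symm
    rw [this]
    refine continuous_tsum (fun n => by fun_prop) hc fun n θ => ?_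
    rw [norm_mul, hexp, mul_one]
  have hcoef : ∀ m : ℕ, ∫ θ in (0 : ℝ)..(2 * π), conj (cexp (m * (θ * I))) * u θ =
      2 * π * c m := by
    intro m
    have hs := intervalIntegral.hasSum_integral_of_dominated_convergence (μ := volume)
      (a := 0) (b := 2 * π) (F := fun (n : ℕ) (θ : ℝ) =>
        conj (cexp (m * (θ * I))) * (c n * cexp (n * (θ * I))))
      (f := fun θ => conj (cexp (m * (θ * I))) * u θ) (fun n _ => ‖c n‖)
      (fun n => (by fun_prop : Continuous _).aestronglyMeasurable)
      (fun n => ae_of_all _ fun θ _ => by simp [hexp])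
      (ae_of_all _ fun θ _ => hc) (by simp)
      (ae_of_all _ fun θ _ => (hu θ).mul_left _)
    have hterm : ∀ n : ℕ, ∫ θ in (0 : ℝ)..(2 * π),
        conj (cexp (m * (θ * I))) * (c n * cexp (n * (θ * I))) =
          if n = m then 2 * π * c m else 0 := by
      intro n
      have : ∀ θ : ℝ, conj (cexp (m * (θ * I))) * (c n * cexp (n * (θ * I))) =
          c n * cexp (((n - m : ℤ) : ℂ) * (θ * I)) := by
        intro θ
        rw [← Complex.exp_conj, mul_left_comm, ← Complex.exp_add]
        congr 2
        simp
        ring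
      simp only [this]
      rw [intervalIntegral.integral_const_mul, integral_exp_int_mul_I]
      by_cases hnm : n = m
      · simp [hnm]; ring
      · have : ¬ ((n : ℤ) - m = 0) := by omega
        simp [hnm, this]
    simp only [hterm] at hs
    exact hs.unique (hasSum_ite_eq m _)
  have hfull := intervalIntegral.hasSum_integral_of_dominated_convergence (μ := volume)
      (a := 0) (b := 2 * π) (F := fun (n : ℕ) (θ : ℝ) =>
        conj (c n * cexp (n * (θ * I))) * u θ)
      (f := fun θ => conj (u θ) * u θ) (fun n θ => ‖c n‖ * ‖u θ‖)
      (fun n => (by fun_prop : Continuous _).aestronglyMeasurable)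
      (fun n => ae_of_all _ fun θ _ => by simp [hexp])
      (ae_of_all _ fun θ _ => hc.mul_right _)
      (by
        simp only [tsum_mul_right]
        exact (by fun_prop : Continuous _).intervalIntegrable _ _)
      (ae_of_all _ fun θ _ => ((Complex.hasSum_conj'.2 (by simpa using hu θ))).mul_right _)
  have hterm : ∀ n : ℕ, ∫ θ in (0 : ℝ)..(2 * π), conj (c n * cexp (n * (θ * I))) * u θ =
      ((2 * π * ‖c n‖ ^ 2 : ℝ) : ℂ) := by
    intro n
    simp only [map_mul, mul_assoc]
    rw [intervalIntegral.integral_const_mul]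
    have := hcoef n
    rw [this]
    rw [mul_left_comm, Complex.conj_mul']
    push_cast
    ring
  simp only [hterm] at hfull
  have hval : ∫ θ in (0 : ℝ)..(2 * π), conj (u θ) * u θ =
      ((∫ θ in (0 : ℝ)..(2 * π), ‖u θ‖ ^ 2 : ℝ) : ℂ) := by
    rw [← intervalIntegral.integral_ofReal]
    congr 1 with θ
    rw [Complex.conj_mul']
    push_cast
    rfl
  rw [hval] at hfull
  have := (Complex.hasSum_ofReal.1 hfull).tsum_eq
  rw [← this, tsum_mul_left]

theorem norm_add_conj_sq (a b : ℂ) :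
    ‖a + conj b‖ ^ 2 = ‖a‖ ^ 2 + ‖b‖ ^ 2 + 2 * (a * b).re := by
  simp only [← Complex.normSq_eq_norm_sq, Complex.normSq_apply, Complex.add_re, Complex.add_im,
    Complex.mul_re, Complex.conj_re, Complex.conj_im]
  ring

theorem integral_norm_sq_circle_add_conj {h g : ℂ → ℂ}
    (hh : DifferentiableOn ℂ h (Metric.ball 0 1)) (hg : DifferentiableOn ℂ g (Metric.ball 0 1))
    (hg0 : g 0 = 0) {r : ℝ} (hr0 : 0 ≤ r) (hr1 : r < 1) :
    ∫ θ in (0 : ℝ)..(2 * π),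
        ‖h ((r : ℂ) * cexp (θ * I)) + conj (g ((r : ℂ) * cexp (θ * I)))‖ ^ 2 =
      (∫ θ in (0 : ℝ)..(2 * π), ‖h ((r : ℂ) * cexp (θ * I))‖ ^ 2) +
        ∫ θ in (0 : ℝ)..(2 * π), ‖g ((r : ℂ) * cexp (θ * I))‖ ^ 2 := by
  have hhc := hh.continuous_on_circle hr0 hr1
  have hgc := hg.continuous_on_circle hr0 hr1
  have hi : ∫ θ in (0 : ℝ)..(2 * π),
      (h ((r : ℂ) * cexp (θ * I)) * g ((r : ℂ) * cexp (θ * I))).re = 0 := by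
    have h1 := integral_circle_eq (hh.mul hg) hr0 hr1
    simp only [Pi.mul_apply] at h1
    have h2 := Complex.reCLM.intervalIntegral_comp_comm
      ((hhc.mul hgc).intervalIntegrable (μ := volume) 0 (2 * π))
    simp only [Complex.reCLM_apply, Pi.mul_apply] at h2
    rw [h2, h1, hg0]
    simp
  simp only [norm_add_conj_sq]
  rw [intervalIntegral.integral_add, intervalIntegral.integral_add,
    intervalIntegral.integral_const_mul, hi, mul_zero, add_zero]
  · exact (hhc.norm.pow 2).intervalIntegrable _ _
  · exact (hgc.norm.pow 2).intervalIntegrable _ _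
  · exact ((hhc.norm.pow 2).add (hgc.norm.pow 2)).intervalIntegrable _ _
  · exact (continuous_const.mul
      (Complex.continuous_re.comp (hhc.mul hgc))).intervalIntegrable _ _

/-- The Riesz–Fejér inequality for `h + conj g` on a circle of radius `r < 1`. -/
theorem integral_norm_sq_diameter_add_conj_le {h g : ℂ → ℂ}
    (hh : DifferentiableOn ℂ h (Metric.ball 0 1)) (hg : DifferentiableOn ℂ g (Metric.ball 0 1))
    (hg0 : g 0 = 0) {r : ℝ} (hr0 : 0 ≤ r) (hr1 : r < 1) :
    ∫ x in (-r)..r, ‖h (x : ℂ) + conj (g (x : ℂ))‖ ^ 2 ≤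
      r * (1 / 2 * (∫ θ in (0 : ℝ)..(2 * π),
        ‖h ((r : ℂ) * cexp (θ * I)) + conj (g ((r : ℂ) * cexp (θ * I)))‖ ^ 2) +
      ∫ θ in (0 : ℝ)..(2 * π),
        ‖h ((r : ℂ) * cexp (θ * I)) * g ((r : ℂ) * cexp (θ * I))‖) := by
  have hmem : ∀ x ∈ Set.uIcc (-r) r, (x : ℂ) ∈ Metric.ball (0 : ℂ) 1 := by
    intro x hx
    rw [Set.uIcc_of_le (by linarith)] at hx
    have : |x| < 1 := abs_lt.2 ⟨by linarith [hx.1], by linarith [hx.2]⟩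
    simpa using this
  have hhc : ContinuousOn (fun x : ℝ => h x) (Set.uIcc (-r) r) :=
    hh.continuousOn.comp (by fun_prop) hmem
  have hgc : ContinuousOn (fun x : ℝ => g x) (Set.uIcc (-r) r) :=
    hg.continuousOn.comp (by fun_prop) hmem
  have h1 := two_mul_integral_norm_sq_diameter_le hh hr0 hr1
  have h2 := two_mul_integral_norm_sq_diameter_le hg hr0 hr1
  have h3 := two_mul_norm_integral_diameter_le (hh.mul hg) hr0 hr1
  simp only [Pi.mul_apply] at h3
  have hre : ∫ x in (-r)..r, (h (x : ℂ) * g (x : ℂ)).re ≤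
      ‖∫ x in (-r)..r, h (x : ℂ) * g (x : ℂ)‖ := by
    have h4 := Complex.reCLM.intervalIntegral_comp_comm
      ((hhc.mul hgc).intervalIntegrable (μ := volume))
    simp only [Complex.reCLM_apply, Pi.mul_apply] at h4
    rw [h4]
    exact Complex.re_le_norm _
  rw [integral_norm_sq_circle_add_conj hh hg hg0 hr0 hr1]
  simp only [norm_add_conj_sq]
  rw [intervalIntegral.integral_add, intervalIntegral.integral_add,
    intervalIntegral.integral_const_mul]
  · linarith
  · exact (hhc.norm.pow 2).intervalIntegrable
  · exact (hgc.norm.pow 2).intervalIntegrable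
  · exact ((hhc.norm.pow 2).add (hgc.norm.pow 2)).intervalIntegrable
  · exact (continuousOn_const.mul
      (Complex.continuous_re.comp_continuousOn (hhc.mul hgc))).intervalIntegrable

theorem Continuous.memLp_restrict_Ioc {E : Type*} [NormedAddCommGroup E]
    {u : ℝ → E} (hu : Continuous u) (p : ℝ≥0∞) (a b : ℝ) :
    MemLp u p (volume.restrict (Set.Ioc a b)) := by
  obtain ⟨C, hC⟩ := isCompact_Icc.exists_bound_of_continuousOn (s := Set.Icc a b) hu.continuousOn
  exact MemLp.of_bound hu.aestronglyMeasurable C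
    (ae_restrict_of_forall_mem measurableSet_Ioc fun x hx => hC x (Set.Ioc_subset_Icc_self hx))

theorem MeasureTheory.MemLp.eLpNorm_two_eq_sqrt {α E : Type*} [MeasurableSpace α]
    {μ : Measure α} [NormedAddCommGroup E] {u : α → E} (hu : MemLp u 2 μ) :
    eLpNorm u 2 μ = ENNReal.ofReal (√(∫ x, ‖u x‖ ^ 2 ∂μ)) := by
  rw [hu.eLpNorm_eq_integral_rpow_norm (by simp) (by simp), Real.sqrt_eq_rpow]
  simp

/-- If `u n → U` in `L²`, then `‖u n‖ → ‖U‖` in `L²`. -/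
theorem tendsto_toLp_norm {α ι E : Type*} [MeasurableSpace α] {μ : Measure α}
    [NormedAddCommGroup E] {l : Filter ι} {u : ι → α → E} {U : α → E}
    (hu : ∀ n, MemLp (u n) 2 μ) (hU : MemLp U 2 μ)
    (huU : Tendsto (fun n => eLpNorm (u n - U) 2 μ) l (𝓝 0)) :
    Tendsto (fun n => (hu n).norm.toLp (fun x => ‖u n x‖)) l
      (𝓝 (hU.norm.toLp (fun x => ‖U x‖))) := by
  rw [Lp.tendsto_Lp_iff_tendsto_eLpNorm'' (fun n x => ‖u n x‖) (fun n => (hu n).norm) _ hU.norm]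
  refine tendsto_of_tendsto_of_tendsto_of_le_of_le tendsto_const_nhds huU
    (fun _ => zero_le) fun n => ?_
  refine eLpNorm_mono fun x => ?_
  simpa using abs_norm_sub_norm_le (u n x) (U x)

/-- The integral of `‖u‖ * ‖v‖` is continuous under `L²` convergence of both factors. -/
theorem tendsto_integral_norm_mul_norm {α ι E F : Type*} [MeasurableSpace α] {μ : Measure α}
    [NormedAddCommGroup E] [NormedAddCommGroup F] {l : Filter ι}
    {u : ι → α → E} {v : ι → α → F} {U : α → E} {V : α → F}
    (hu : ∀ n, MemLp (u n) 2 μ) (hv : ∀ n, MemLp (v n) 2 μ) (hU : MemLp U 2 μ) (hV : MemLp V 2 μ)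
    (huU : Tendsto (fun n => eLpNorm (u n - U) 2 μ) l (𝓝 0))
    (hvV : Tendsto (fun n => eLpNorm (v n - V) 2 μ) l (𝓝 0)) :
    Tendsto (fun n => ∫ x, ‖u n x‖ * ‖v n x‖ ∂μ) l (𝓝 (∫ x, ‖U x‖ * ‖V x‖ ∂μ)) := by
  have hin : ∀ {u : α → E} {v : α → F} (hu : MemLp u 2 μ) (hv : MemLp v 2 μ),
      inner ℝ (hu.norm.toLp (fun x => ‖u x‖)) (hv.norm.toLp (fun x => ‖v x‖)) =
        ∫ x, ‖u x‖ * ‖v x‖ ∂μ := by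
    intro u v hu hv
    rw [L2.inner_def]
    refine integral_congr_ae ?_
    filter_upwards [hu.norm.coeFn_toLp, hv.norm.coeFn_toLp] with x h1 h2
    rw [h1, h2]
    simp [mul_comm]
  have := (tendsto_toLp_norm hu hU huU).inner (𝕜 := ℝ) (tendsto_toLp_norm hv hV hvV)
  rw [hin hU hV] at this
  exact this.congr fun n => hin (hu n) (hv n)

/-- A holomorphic function on the unit disk with bounded `L²` means converges in `L²` to its
radial boundary function. -/
theorem memLp_boundary_and_tendsto_eLpNorm {h : ℂ → ℂ} {H : ℝ → ℂ}
    (hh : DifferentiableOn ℂ h (Metric.ball 0 1)) {C : ℝ}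
    (hC : ∀ r : ℝ, 0 ≤ r → r < 1 →
      ∫ θ in (0 : ℝ)..(2 * π), ‖h ((r : ℂ) * cexp (θ * I))‖ ^ 2 ≤ C)
    {r : ℕ → ℝ} (hr0 : ∀ n, 0 ≤ r n) (hr1 : ∀ n, r n < 1) (hr : Tendsto r atTop (𝓝 1))
    (hH : ∀ᵐ θ : ℝ, Tendsto (fun n => h ((r n : ℂ) * cexp (θ * I))) atTop (𝓝 (H θ))) :
    MemLp H 2 (volume.restrict (Set.Ioc 0 (2 * π))) ∧
      Tendsto (fun n => eLpNorm ((fun θ : ℝ => h ((r n : ℂ) * cexp (θ * I))) - H) 2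
        (volume.restrict (Set.Ioc 0 (2 * π)))) atTop (𝓝 0) := by
  set μ := volume.restrict (Set.Ioc 0 (2 * π)) with hμ
  have htwo : (0 : ℝ) ≤ 2 * π := by positivity
  obtain ⟨c, hc⟩ : ∃ c : ℕ → ℂ, ∀ z ∈ Metric.ball (0 : ℂ) 1,
      HasSum (fun n => c n * z ^ n) (h z) := by
    refine ⟨fun n => (n.factorial : ℂ)⁻¹ * iteratedDeriv n h 0, fun z hz => ?_⟩
    have := hasSum_taylorSeries_on_ball hh hz
    refine this.congr_fun ?_
    intro n
    simp only [smul_eq_mul, sub_zero]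
    ring
  have hser : ∀ s : ℝ, 0 ≤ s → s < 1 → ∀ θ : ℝ,
      HasSum (fun n : ℕ => c n * (s : ℂ) ^ n * cexp (n * (θ * I)))
        (h ((s : ℂ) * cexp (θ * I))) := by
    intro s hs0 hs1 θ
    convert hc _ (ofReal_mul_exp_mem_ball hs0 hs1 θ) using 2 with n
    rw [mul_pow, Complex.exp_nat_mul, mul_assoc]
  have hsum : ∀ s : ℝ, 0 ≤ s → s < 1 → Summable fun n => ‖c n * (s : ℂ) ^ n‖ := by
    intro s hs0 hs1
    have := hser s hs0 hs1 0
    simpa using this.summable.norm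
  have hparseval : ∀ s : ℝ, 0 ≤ s → s < 1 →
      ∫ θ in (0 : ℝ)..(2 * π), ‖h ((s : ℂ) * cexp (θ * I))‖ ^ 2 =
        2 * π * ∑' n, ‖c n * (s : ℂ) ^ n‖ ^ 2 :=
    fun s hs0 hs1 => integral_norm_sq_eq_tsum (hsum s hs0 hs1) (hser s hs0 hs1)
  have hsq : ∀ {a : ℕ → ℂ}, (Summable fun n => ‖a n‖) → Summable fun n => ‖a n‖ ^ 2 := by
    intro a ha
    refine Summable.of_norm_bounded_eventually_nat (g := fun n => ‖a n‖) ha ?_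
    filter_upwards [ha.tendsto_atTop_zero.eventually (gt_mem_nhds one_pos)] with n hn
    rw [norm_pow, norm_norm]
    nlinarith [norm_nonneg (a n)]
  have hl2 : Summable fun n => ‖c n‖ ^ 2 := by
    refine summable_of_sum_le (c := C / (2 * π)) (fun n => by positivity) fun t => ?_
    have hlim : Tendsto (fun k => ∑ n ∈ t, ‖c n * (r k : ℂ) ^ n‖ ^ 2) atTop
        (𝓝 (∑ n ∈ t, ‖c n * ((1 : ℝ) : ℂ) ^ n‖ ^ 2)) := by
      refine tendsto_finsetSum _ fun n _ => ?_
      have : Continuous fun s : ℝ => ‖c n * (s : ℂ) ^ n‖ ^ 2 := by fun_prop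
      exact (this.tendsto 1).comp hr
    have hle := le_of_tendsto hlim (b := C / (2 * π)) (Eventually.of_forall fun k => ?_)
    · simpa using hle
    · have h1 := (hsq (hsum _ (hr0 k) (hr1 k))).sum_le_tsum t fun n _ => by positivity
      have h2 := hC _ (hr0 k) (hr1 k)
      rw [hparseval _ (hr0 k) (hr1 k)] at h2
      rw [le_div_iff₀ (by positivity)]
      nlinarith [pi_pos]
  have hcont : ∀ n, Continuous fun θ : ℝ => h ((r n : ℂ) * cexp (θ * I)) :=
    fun n => hh.continuous_on_circle (hr0 n) (hr1 n)
  have hdiff : ∀ s t : ℝ, 0 ≤ s → s < 1 → s ≤ t → t < 1 →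
      ∫ θ in (0 : ℝ)..(2 * π), ‖h ((t : ℂ) * cexp (θ * I)) - h ((s : ℂ) * cexp (θ * I))‖ ^ 2 ≤
        2 * π * ∑' n, ‖c n‖ ^ 2 * (1 - s ^ n) ^ 2 := by
    intro s t hs0 hs1 hst ht1
    have ht0 := hs0.trans hst
    have hsub : ∀ n : ℕ, c n * (t : ℂ) ^ n - c n * (s : ℂ) ^ n = c n * ((t ^ n - s ^ n : ℝ) : ℂ) := by
      intro n; push_cast; ring
    have hs' : Summable fun n => ‖c n * (t : ℂ) ^ n - c n * (s : ℂ) ^ n‖ :=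
      ((hsum t ht0 ht1).of_norm.sub (hsum s hs0 hs1).of_norm).norm
    rw [integral_norm_sq_eq_tsum hs' fun θ => by
      simpa only [sub_mul] using (hser t ht0 ht1 θ).sub (hser s hs0 hs1 θ)]
    refine mul_le_mul_of_nonneg_left ((hsq hs').tsum_le_tsum (fun n => ?_) ?_) htwo
    · rw [hsub, norm_mul, mul_pow, Complex.norm_real, Real.norm_eq_abs, sq_abs]
      have h1 : s ^ n ≤ t ^ n := pow_le_pow_left₀ hs0 hst n
      have h2 : t ^ n ≤ 1 := pow_le_one₀ ht0 ht1.le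
      gcongr
    · refine hl2.of_nonneg_of_le (fun n => by positivity) fun n => ?_
      have h1 : s ^ n ≤ 1 := pow_le_one₀ hs0 hs1.le
      have h2 : 0 ≤ s ^ n := pow_nonneg hs0 n
      exact mul_le_of_le_one_right (by positivity) (by nlinarith)
  have hbound : ∀ m, eLpNorm ((fun θ : ℝ => h ((r m : ℂ) * cexp (θ * I))) - H) 2 μ ≤
      ENNReal.ofReal (√(2 * π * ∑' n, ‖c n‖ ^ 2 * (1 - r m ^ n) ^ 2)) := by
    intro m
    have hfatou := Lp.eLpNorm_lim_le_liminf_eLpNorm (μ := μ) (p := 2)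
      (f := fun k => (fun θ : ℝ => h ((r m : ℂ) * cexp (θ * I))) -
        fun θ : ℝ => h ((r k : ℂ) * cexp (θ * I)))
      (fun k => ((hcont m).sub (hcont k)).aestronglyMeasurable)
      ((fun θ : ℝ => h ((r m : ℂ) * cexp (θ * I))) - H) (by
        filter_upwards [ae_restrict_of_ae hH] with θ hθ
        exact tendsto_const_nhds.sub hθ)
    refine hfatou.trans (liminf_le_of_frequently_le' (Eventually.frequently ?_))
    filter_upwards [hr.eventually (lt_mem_nhds (hr1 m))] with k hk
    rw [eLpNorm_sub_comm, (((hcont k).sub (hcont m)).memLp_restrict_Ioc 2 0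
      (2 * π)).eLpNorm_two_eq_sqrt, ← intervalIntegral.integral_of_le htwo]
    exact ENNReal.ofReal_le_ofReal (Real.sqrt_le_sqrt
      (hdiff _ _ (hr0 m) (hr1 m) hk.le (hr1 k)))
  have hmeas : AEStronglyMeasurable H μ :=
    aestronglyMeasurable_of_tendsto_ae atTop (fun n => (hcont n).aestronglyMeasurable)
      (ae_restrict_of_ae hH)
  constructor
  · have h1 : MemLp (fun θ : ℝ => h ((r 0 : ℂ) * cexp (θ * I))) 2 μ :=
      (hcont 0).memLp_restrict_Ioc 2 0 (2 * π)
    have h2 : MemLp ((fun θ : ℝ => h ((r 0 : ℂ) * cexp (θ * I))) - H) 2 μ :=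
      ⟨h1.1.sub hmeas, (hbound 0).trans_lt ENNReal.ofReal_lt_top⟩
    simpa using h1.sub h2
  · refine tendsto_of_tendsto_of_tendsto_of_le_of_le tendsto_const_nhds ?_
      (fun _ => zero_le) hbound
    have hlim : Tendsto (fun m => ∑' n, ‖c n‖ ^ 2 * (1 - r m ^ n) ^ 2) atTop
        (𝓝 (∑' n, ‖c n‖ ^ 2 * (1 - (1 : ℝ) ^ n) ^ 2)) := by
      refine tendsto_tsum_of_dominated_convergence hl2 (fun n => ?_)
        (Eventually.of_forall fun m n => ?_)
      · have : Continuous fun s : ℝ => ‖c n‖ ^ 2 * (1 - s ^ n) ^ 2 := by fun_prop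
        exact (this.tendsto 1).comp hr
      · have h1 : r m ^ n ≤ 1 := pow_le_one₀ (hr0 m) (hr1 m).le
        have h2 : 0 ≤ r m ^ n := pow_nonneg (hr0 m) n
        rw [Real.norm_of_nonneg (by positivity)]
        exact mul_le_of_le_one_right (by positivity) (by nlinarith)
    have := ENNReal.tendsto_ofReal ((Real.continuous_sqrt.tendsto _).comp
      (hlim.const_mul (2 * π)))
    simpa using this

theorem tendsto_integral_symmetric_interval {u : ℝ → ℝ} (hu : IntervalIntegrable u volume (-1) 1)
    {r : ℕ → ℝ} (hr0 : ∀ n, 0 ≤ r n) (hr1 : ∀ n, r n < 1) (hr : Tendsto r atTop (𝓝 1)) :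
    Tendsto (fun n => ∫ x in (-(r n))..(r n), u x) atTop (𝓝 (∫ x in (-1 : ℝ)..1, u x)) := by
  have hsub : ∀ a ∈ Set.Icc (-1 : ℝ) 1, ∀ b ∈ Set.Icc (-1 : ℝ) 1,
      IntervalIntegrable u volume a b := by
    intro a ha b hb
    refine hu.mono_set ?_
    rw [Set.uIcc_of_le (by norm_num : (-1 : ℝ) ≤ 1)]
    exact Set.ordConnected_Icc.uIcc_subset ha hb
  have hcont := intervalIntegral.continuousOn_primitive_interval' hu (a := 0) (by simp)
  rw [Set.uIcc_of_le (by norm_num : (-1 : ℝ) ≤ 1)] at hcont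
  have hsplit : ∀ s ∈ Set.Icc (0 : ℝ) 1,
      ∫ x in (-s)..s, u x = (∫ x in (0 : ℝ)..s, u x) - ∫ x in (0 : ℝ)..(-s), u x := by
    intro s hs
    have m0 : (0 : ℝ) ∈ Set.Icc (-1 : ℝ) 1 := by simp
    exact (intervalIntegral.integral_interval_sub_left
      (hsub _ m0 _ ⟨by linarith [hs.1], hs.2⟩)
      (hsub _ m0 _ ⟨by linarith [hs.2], by linarith [hs.1]⟩)).symm
  rw [hsplit 1 (by simp)]
  simp only [fun n => hsplit (r n) ⟨hr0 n, (hr1 n).le⟩]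
  refine Tendsto.sub ?_ ?_
  · exact (hcont 1 (by simp)).tendsto.comp (tendsto_nhdsWithin_iff.2
      ⟨hr, Eventually.of_forall fun n => ⟨by linarith [hr0 n], (hr1 n).le⟩⟩)
  · exact (hcont (-1) (by simp)).tendsto.comp (tendsto_nhdsWithin_iff.2
      ⟨hr.neg, Eventually.of_forall fun n => ⟨by linarith [hr1 n], by linarith [hr0 n]⟩⟩)

/-- If `f = h + conj g ∈ h²` with `g 0 = 0`, and `F, H, G` are the a.e. radial boundary
values of `f, h, g`, then
`∫_{-1}^{1} |f(x)|² dx ≤ (1/2) ∫₀^{2π} |F(θ)|² dθ + ∫₀^{2π} |H(θ) G(θ)| dθ`. -/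
theorem harmonic_riesz_fejer_hg (h g f : ℂ → ℂ) (F H G : ℝ → ℂ)
    (hh : AnalyticOn ℂ h (Metric.ball 0 1)) (hg : AnalyticOn ℂ g (Metric.ball 0 1))
    (hg0 : g 0 = 0)
    (hf : ∀ z ∈ Metric.ball (0:ℂ) 1, f z = h z + starRingEnd ℂ (g z))
    (hH2 : ∃ C : ℝ, ∀ r : ℝ, 0 ≤ r → r < 1 →
      (∫ θ in (0:ℝ)..(2 * π), ‖f ((r : ℂ) * Complex.exp (θ * Complex.I))‖ ^ 2) ≤ C)
    (hF : ∀ᵐ θ : ℝ, Tendsto (fun r : ℝ => f ((r : ℂ) * Complex.exp (θ * Complex.I)))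
      (nhdsWithin 1 (Set.Iio 1)) (nhds (F θ)))
    (hHlim : ∀ᵐ θ : ℝ, Tendsto (fun r : ℝ => h ((r : ℂ) * Complex.exp (θ * Complex.I)))
      (nhdsWithin 1 (Set.Iio 1)) (nhds (H θ)))
    (hGlim : ∀ᵐ θ : ℝ, Tendsto (fun r : ℝ => g ((r : ℂ) * Complex.exp (θ * Complex.I)))
      (nhdsWithin 1 (Set.Iio 1)) (nhds (G θ))) :
    (∫ x in (-1:ℝ)..1, ‖f (x : ℂ)‖ ^ 2) ≤
      (1 / 2) * (∫ θ in (0:ℝ)..(2 * π), ‖F θ‖ ^ 2) +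
        ∫ θ in (0:ℝ)..(2 * π), ‖H θ * G θ‖ := by
  have htwo : (0 : ℝ) ≤ 2 * π := by positivity
  by_cases hfint : IntervalIntegrable (fun x : ℝ => ‖f (x : ℂ)‖ ^ 2) volume (-1) 1
  swap
  · rw [intervalIntegral.integral_undef hfint]
    have h1 : 0 ≤ ∫ θ in (0:ℝ)..(2 * π), ‖F θ‖ ^ 2 :=
      intervalIntegral.integral_nonneg htwo fun _ _ => by positivity
    have h2 : 0 ≤ ∫ θ in (0:ℝ)..(2 * π), ‖H θ * G θ‖ :=
      intervalIntegral.integral_nonneg htwo fun _ _ => by positivity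
    linarith
  obtain ⟨C, hC⟩ := hH2
  have hhd := hh.differentiableOn
  have hgd := hg.differentiableOn
  obtain ⟨r, hr0, hr1, hr⟩ : ∃ r : ℕ → ℝ, (∀ n, 0 ≤ r n) ∧ (∀ n, r n < 1) ∧
      Tendsto r atTop (𝓝 1) := by
    refine ⟨fun n => 1 - 1 / ((n : ℝ) + 1), fun n => ?_, fun n => ?_, ?_⟩
    · rw [sub_nonneg, div_le_one (by positivity)]
      linarith [n.cast_nonneg (α := ℝ)]
    · have : 0 < 1 / ((n : ℝ) + 1) := by positivity
      linarith
    · simpa using (tendsto_one_div_add_atTop_nhds_zero_nat (𝕜 := ℝ)).const_sub 1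
  have hrw : Tendsto r atTop (𝓝[<] 1) := tendsto_nhdsWithin_iff.2 ⟨hr, Eventually.of_forall hr1⟩
  have hfcirc : ∀ s : ℝ, 0 ≤ s → s < 1 → ∀ θ : ℝ, f ((s : ℂ) * cexp (θ * I)) =
      h ((s : ℂ) * cexp (θ * I)) + conj (g ((s : ℂ) * cexp (θ * I))) :=
    fun s hs0 hs1 θ => hf _ (ofReal_mul_exp_mem_ball hs0 hs1 θ)
  have hmeans : ∀ s : ℝ, 0 ≤ s → s < 1 →
      (∫ θ in (0 : ℝ)..(2 * π), ‖h ((s : ℂ) * cexp (θ * I))‖ ^ 2) +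
        (∫ θ in (0 : ℝ)..(2 * π), ‖g ((s : ℂ) * cexp (θ * I))‖ ^ 2) ≤ C := by
    intro s hs0 hs1
    have := hC s hs0 hs1
    simp only [hfcirc s hs0 hs1] at this
    rwa [integral_norm_sq_circle_add_conj hhd hgd hg0 hs0 hs1] at this
  have hnonneg : ∀ (k : ℂ → ℂ) (s : ℝ),
      0 ≤ ∫ θ in (0 : ℝ)..(2 * π), ‖k ((s : ℂ) * cexp (θ * I))‖ ^ 2 :=
    fun k s => intervalIntegral.integral_nonneg htwo fun _ _ => by positivity
  obtain ⟨hHmem, hHtend⟩ := memLp_boundary_and_tendsto_eLpNorm hhd (C := C)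
    (fun s hs0 hs1 => by linarith [hmeans s hs0 hs1, hnonneg g s]) hr0 hr1 hr
    (hHlim.mono fun θ hθ => hθ.comp hrw)
  obtain ⟨hGmem, hGtend⟩ := memLp_boundary_and_tendsto_eLpNorm hgd (C := C)
    (fun s hs0 hs1 => by linarith [hmeans s hs0 hs1, hnonneg h s]) hr0 hr1 hr
    (hGlim.mono fun θ hθ => hθ.comp hrw)
  set μ := volume.restrict (Set.Ioc 0 (2 * π)) with hμ
  have hhc : ∀ n, Continuous fun θ : ℝ => h ((r n : ℂ) * cexp (θ * I)) :=
    fun n => hhd.continuous_on_circle (hr0 n) (hr1 n)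
  have hgc : ∀ n, Continuous fun θ : ℝ => g ((r n : ℂ) * cexp (θ * I)) :=
    fun n => hgd.continuous_on_circle (hr0 n) (hr1 n)
  have hfc : ∀ n, Continuous fun θ : ℝ => f ((r n : ℂ) * cexp (θ * I)) := by
    intro n
    simp only [hfcirc (r n) (hr0 n) (hr1 n)]
    exact (hhc n).add (Complex.continuous_conj.comp (hgc n))
  have hFae : F =ᵐ[μ] fun θ => H θ + conj (G θ) := by
    filter_upwards [ae_restrict_of_ae hF, ae_restrict_of_ae hHlim, ae_restrict_of_ae hGlim]
      with θ h1 h2 h3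
    refine tendsto_nhds_unique (h1.comp hrw) ?_
    refine ((h2.comp hrw).add ((Complex.continuous_conj.tendsto _).comp (h3.comp hrw))).congr
      fun n => ?_
    exact (hfcirc (r n) (hr0 n) (hr1 n) θ).symm
  have hGconj : MemLp (fun θ => conj (G θ)) 2 μ := hGmem.star
  have hFmem : MemLp F 2 μ := (hHmem.add hGconj).ae_eq hFae.symm
  have hFtend : Tendsto (fun n => eLpNorm ((fun θ : ℝ => f ((r n : ℂ) * cexp (θ * I))) - F) 2 μ)
      atTop (𝓝 0) := by
    refine tendsto_of_tendsto_of_tendsto_of_le_of_le tendsto_const_nhds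
      (by simpa using hHtend.add hGtend) (fun _ => zero_le) fun n => ?_
    have hGn : AEStronglyMeasurable ((fun θ : ℝ => g ((r n : ℂ) * cexp (θ * I))) - G) μ :=
      (hgc n).aestronglyMeasurable.sub hGmem.1
    calc eLpNorm ((fun θ : ℝ => f ((r n : ℂ) * cexp (θ * I))) - F) 2 μ
        = eLpNorm (((fun θ : ℝ => h ((r n : ℂ) * cexp (θ * I))) - H) +
            star ((fun θ : ℝ => g ((r n : ℂ) * cexp (θ * I))) - G)) 2 μ := by
          refine eLpNorm_congr_ae ?_
          filter_upwards [hFae] with θ hθ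
          simp only [Pi.sub_apply, Pi.add_apply, Pi.star_apply, hθ,
            hfcirc (r n) (hr0 n) (hr1 n), star_sub, starRingEnd_apply]
          ring
      _ ≤ _ := eLpNorm_add_le ((hhc n).aestronglyMeasurable.sub hHmem.1) hGn.star one_le_two
      _ = _ := by rw [eLpNorm_star]
  have hcirc := tendsto_integral_norm_mul_norm
    (fun n => (hfc n).memLp_restrict_Ioc 2 0 (2 * π))
    (fun n => (hfc n).memLp_restrict_Ioc 2 0 (2 * π)) hFmem hFmem hFtend hFtend
  have hprod := tendsto_integral_norm_mul_norm
    (fun n => (hhc n).memLp_restrict_Ioc 2 0 (2 * π))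
    (fun n => (hgc n).memLp_restrict_Ioc 2 0 (2 * π)) hHmem hGmem hHtend hGtend
  simp only [← pow_two, ← norm_mul, ← intervalIntegral.integral_of_le htwo] at hcirc hprod
  have hrhs := hr.mul ((hcirc.const_mul (1 / 2)).add hprod)
  rw [one_mul] at hrhs
  refine le_of_tendsto_of_tendsto' (tendsto_integral_symmetric_interval hfint hr0 hr1 hr) hrhs
    fun n => ?_
  have hbase := integral_norm_sq_diameter_add_conj_le hhd hgd hg0 (hr0 n) (hr1 n)
  simp only [← hfcirc (r n) (hr0 n) (hr1 n)] at hbase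
  refine le_of_eq_of_le (intervalIntegral.integral_congr fun x hx => ?_) hbase
  rw [Set.uIcc_of_le (by linarith [hr0 n])] at hx
  have hx1 : |x| < 1 := abs_lt.2 ⟨by linarith [hx.1, hr1 n], by linarith [hx.2, hr1 n]⟩
  simp only [hf (x : ℂ) (by simpa using hx1)]
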